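/- The sequence W^(1)[g_n], indexed over odd n ≥ 3, is strictly decreasing: for every odd n ≥ 3, W^(1)[g_{n+2}] < W^(1)[g_n]. -/

import Mathlib

open Finset

namespace BKS

/-- sign function: 1 if z ≥ 0, -1 otherwise. -/
noncomputable def sgn (z : ℝ) : ℝ := if 0 ≤ z then 1 else -1

/-- encode Bool as the ±1 value of a bit. -/
def chi (b : Bool) : ℝ := if b then 1 else -1

/-- Fourier coefficient of f at S. -/
noncomputable def fourierCoeff {n : ℕ} (f : (Fin n → Bool) → ℝ) (S : Finset (Fin n)) : ℝ :=
  (1 / 2 ^ n : ℝ) * ∑ x : Fin n → Bool, f x * ∏ i ∈ S, chi (x i)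

/-- Fourier weight of f at level k: W^(k)[f]. -/
noncomputable def fourierWeight {n : ℕ} (k : ℕ) (f : (Fin n → Bool) → ℝ) : ℝ :=
  ∑ S ∈ Finset.univ.filter (fun S : Finset (Fin n) => S.card = k), (fourierCoeff f S) ^ 2

/-- Noise stability of f at ρ. -/
noncomputable def noiseStab {n : ℕ} (ρ : ℝ) (f : (Fin n → Bool) → ℝ) : ℝ :=
  ∑ k ∈ Finset.range (n + 1), ρ ^ k * fourierWeight k f

/-- Majority function on n bits. -/
noncomputable def Maj (n : ℕ) : (Fin n → Bool) → ℝ := fun x => sgn (∑ i, chi (x i))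

/-- The function g_n(x) = sgn(2(x_1 + ⋯ + x_{n-3}) + x_{n-2} + x_{n-1} + x_n). -/
noncomputable def gfun (n : ℕ) : (Fin n → Bool) → ℝ :=
  fun x => sgn (∑ i : Fin n, (if (i : ℕ) < n - 3 then (2 : ℝ) else 1) * chi (x i))

/-- f is a linear threshold function. -/
def IsLTF {n : ℕ} (f : (Fin n → Bool) → ℝ) : Prop :=
  ∃ (w0 : ℝ) (w : Fin n → ℝ), ∀ x, f x = sgn (w0 + ∑ i, w i * chi (x i))


/-- number of true bits -/
def cnt {N : ℕ} (x : Fin N → Bool) : ℕ := ∑ i, (x i).toNat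

lemma sum_chi {N : ℕ} (x : Fin N → Bool) : ∑ i, chi (x i) = 2 * (cnt x : ℝ) - N := by
  have h : ∀ b : Bool, chi b = 2 * (b.toNat : ℝ) - 1 := by
    intro b; cases b <;> norm_num [chi]
  simp [h, cnt, Finset.sum_sub_distrib, Finset.mul_sum]

lemma card_cnt (N k : ℕ) : (univ.filter (fun x : Fin N → Bool => cnt x = k)).card = N.choose k := by
  have h : N.choose k = (Finset.powersetCard k (univ : Finset (Fin N))).card := by
    simp
  rw [h]
  have hc : ∀ x : Fin N → Bool, cnt x = (univ.filter (fun i => x i = true)).card := by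
    intro x
    rw [Finset.card_filter]
    unfold cnt
    refine Finset.sum_congr rfl fun i _ => ?_
    cases x i <;> simp
  refine Finset.card_bij' (fun x _ => univ.filter (fun i => x i = true))
    (fun S _ => fun i => decide (i ∈ S)) ?_ ?_ ?_ ?_
  · intro x hx
    simp only [mem_filter, mem_univ, true_and] at hx
    simp [mem_powersetCard, ← hc, hx]
  · intro S hS
    simp only [mem_powersetCard] at hS
    simp [hc, hS.2]
  · intro x _
    funext i
    simp
  · intro S _
    ext i
    simp

lemma sum_cnt (N k : ℕ) :
    ∑ x : Fin N → Bool, (if cnt x = k then (1 : ℝ) else 0) = N.choose k := by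
  rw [← card_cnt, Finset.sum_boole]

lemma sum_cons {N : ℕ} (i : Fin (N + 1)) (f : (Fin (N + 1) → Bool) → ℝ) :
    ∑ x, f x = ∑ x : Fin N → Bool, (f (i.insertNth true x) + f (i.insertNth false x)) := by
  rw [← (Fin.insertNthEquiv (fun _ => Bool) i).sum_comp, Fintype.sum_prod_type]
  simp [Fin.insertNthEquiv, Finset.sum_add_distrib]

lemma cnt_insert {N : ℕ} (i : Fin (N + 1)) (b : Bool) (x : Fin N → Bool) :
    cnt (i.insertNth b x : Fin (N + 1) → Bool) = b.toNat + cnt x := by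
  simp [cnt, Fin.sum_univ_succAbove _ i]

/-- integer sign as a real -/
noncomputable def sg (t : ℤ) : ℝ := if 0 < t then 1 else if t < 0 then -1 else 0

lemma sgn_int (t : ℤ) : sgn (t : ℝ) = if 0 ≤ t then 1 else -1 := by
  simp [sgn]

lemma sum3 (f : (Fin 3 → Bool) → ℝ) : ∑ y, f y =
    f ![true, true, true] + f ![true, true, false] + f ![true, false, true] + f ![true, false, false]
    + f ![false, true, true] + f ![false, true, false] + f ![false, false, true]
    + f ![false, false, false] := by
  have h : (univ : Finset (Fin 3 → Bool)) = {![true, true, true], ![true, true, false],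
    ![true, false, true], ![true, false, false], ![false, true, true], ![false, true, false],
    ![false, false, true], ![false, false, false]} := by decide
  rw [h]
  repeat rw [Finset.sum_insert (by decide)]
  rw [Finset.sum_singleton]
  ring

lemma sgn_cnt (t : ℤ) (y : Fin 3 → Bool) :
    sgn (4 * (t : ℝ) + ∑ i, chi (y i)) = if 0 ≤ 4 * t + 2 * (cnt y : ℤ) - 3 then 1 else -1 := by
  rw [← sgn_int, sum_chi]
  congr 1
  push_cast
  ring

lemma S3 (t : ℤ) : ∑ y : Fin 3 → Bool, sgn (4 * (t : ℝ) + ∑ i, chi (y i)) = 8 * sg t := by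
  simp only [sgn_cnt]
  rw [sum3]
  simp only [cnt, Fin.sum_univ_three, sg]
  simp
  rcases lt_trichotomy t 0 with h | h | h
  · repeat rw [if_neg (by omega)]
    rw [if_pos (by omega)]; norm_num
  · subst h; norm_num
  · repeat rw [if_pos (by omega)]
    norm_num

lemma S3' (t : ℤ) (j : Fin 3) :
    ∑ y : Fin 3 → Bool, sgn (4 * (t : ℝ) + ∑ i, chi (y i)) * chi (y j) = if t = 0 then 4 else 0 := by
  simp only [sgn_cnt]
  rw [sum3]
  simp only [cnt, Fin.sum_univ_three]
  rcases lt_trichotomy t 0 with h | h | h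
  · simp
    repeat rw [if_neg (by omega)]
    fin_cases j <;> norm_num [chi]
  · subst h; simp; fin_cases j <;> norm_num [chi]
  · simp
    repeat rw [if_pos (by omega)]
    rw [if_neg (by omega)]
    fin_cases j <;> norm_num [chi]

lemma gfun_append (m : ℕ) (x : Fin (2 * m) → Bool) (y : Fin 3 → Bool) :
    gfun (2 * m + 3) (Fin.append x y)
      = sgn (4 * (((cnt x : ℤ) - m : ℤ) : ℝ) + ∑ i, chi (y i)) := by
  unfold gfun
  congr 1
  rw [Fin.sum_univ_add]
  congr 1
  · simp [← Finset.mul_sum, sum_chi]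
    ring
  · simp

lemma sum_append (m : ℕ) (f : (Fin (2 * m + 3) → Bool) → ℝ) :
    ∑ z, f z = ∑ x : Fin (2 * m) → Bool, ∑ y : Fin 3 → Bool, f (Fin.append x y) := by
  rw [← (Fin.appendEquiv (2 * m) 3).sum_comp, Fintype.sum_prod_type]
  rfl

lemma block2 (m : ℕ) (j : Fin 3) :
    ∑ z, gfun (2 * m + 3) z * chi (z (Fin.natAdd (2 * m) j)) = 4 * (m.centralBinom : ℝ) := by
  rw [sum_append]
  simp only [gfun_append, Fin.append_right, S3']
  rw [Nat.centralBinom_eq_two_mul_choose, ← sum_cnt, Finset.mul_sum]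
  refine Finset.sum_congr rfl fun x _ => ?_
  by_cases h : cnt x = m
  · simp [h]
  · rw [if_neg (by omega), if_neg h]; simp

lemma block1 (m : ℕ) (i : Fin (2 * m)) :
    ∑ z, gfun (2 * m + 3) z * chi (z (Fin.castAdd 3 i)) = 8 * (m.centralBinom : ℝ) := by
  rw [sum_append]
  simp only [gfun_append, Fin.append_left, ← Finset.sum_mul, S3]
  obtain _ | j := m
  · exact i.elim0
  change Fin (2 * j + 1 + 1) at i
  change ∑ x : Fin (2 * j + 1 + 1) → Bool, _ = _
  rw [sum_cons i]
  simp only [cnt_insert, Fin.insertNth_apply_same]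
  rw [Nat.centralBinom_eq_two_mul_choose]
  change _ = 8 * (((2 * j + 1 + 1).choose (j + 1) : ℕ) : ℝ)
  rw [Nat.choose_succ_succ, Nat.cast_add ((2 * j + 1).choose j), ← sum_cnt, ← sum_cnt, ← Finset.sum_add_distrib,
    Finset.mul_sum]
  refine Finset.sum_congr rfl fun x _ => ?_
  simp only [sg, chi, Bool.toNat_true, Bool.toNat_false]
  push_cast
  split_ifs <;> first | omega | norm_num at *

lemma weight_one {n : ℕ} (f : (Fin n → Bool) → ℝ) :
    fourierWeight 1 f = ∑ i, ((1 / 2 ^ n : ℝ) * ∑ x, f x * chi (x i)) ^ 2 := by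
  unfold fourierWeight
  have h : (univ.filter fun S : Finset (Fin n) => S.card = 1) =
      univ.map ⟨fun i : Fin n => ({i} : Finset (Fin n)), Finset.singleton_injective⟩ := by
    ext S
    simp [Finset.card_eq_one, eq_comm]
  rw [h, Finset.sum_map]
  simp [fourierCoeff]

lemma weight_g (m : ℕ) : fourierWeight 1 (gfun (2 * m + 3)) =
    ((m.centralBinom : ℝ) / 4 ^ m) ^ 2 * (2 * m + 3 / 4) := by
  rw [weight_one, Fin.sum_univ_add]
  simp only [block1, block2]
  have h : (2 : ℝ) ^ (2 * m + 3) = 8 * 4 ^ m := by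
    rw [pow_add, pow_mul]; norm_num; ring
  simp [h]
  field_simp
  ring

theorem stmt13 (n : ℕ) (hn : Odd n) (h3 : 3 ≤ n) :
    fourierWeight 1 (gfun (n + 2)) < fourierWeight 1 (gfun n) := by
  obtain ⟨k, hk⟩ := hn
  obtain ⟨m, rfl⟩ : ∃ m, n = 2 * m + 3 := ⟨k - 1, by omega⟩
  rw [show 2 * m + 3 + 2 = 2 * (m + 1) + 3 by ring, weight_g, weight_g]
  have hc : ((m : ℝ) + 1) * ((m + 1).centralBinom : ℝ) = 2 * (2 * m + 1) * (m.centralBinom : ℝ) := by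
    exact_mod_cast Nat.succ_mul_centralBinom_succ m
  have hm : (0 : ℝ) ≤ m := Nat.cast_nonneg m
  have hp : (0 : ℝ) < (m.centralBinom : ℝ) / 4 ^ m := by
    have := Nat.centralBinom_pos m
    positivity
  have hr : ((m + 1).centralBinom : ℝ) / 4 ^ (m + 1)
      = (m.centralBinom : ℝ) / 4 ^ m * ((2 * m + 1) / (2 * m + 2)) := by
    have : ((m + 1).centralBinom : ℝ) = 2 * (2 * m + 1) * (m.centralBinom : ℝ) / (m + 1) := by
      rw [eq_div_iff (by positivity), ← hc]; ring
    rw [this, pow_succ]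
    field_simp
    ring
  rw [hr, mul_pow, mul_assoc]
  refine mul_lt_mul_of_pos_left ?_ (by positivity)
  rw [div_pow, div_mul_eq_mul_div, div_lt_iff₀ (by positivity)]
  push_cast
  nlinarith

end BKS
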